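/- Let G=(V,E) be an oriented graph with |V| = n and |E| = m, and let k ≥ 2 be an integer. Suppose φ: E → Z/2 and ψ: E → Z/k are flows with supp(φ) ∪ supp(ψ) = E, and let t = |supp(φ)|. Then G has at least 2^{m − n − t/k} nowhere-zero (Z/2 × Z/k)-flows. -/

import Mathlib

open scoped Classical

/-- A multigraph with an orientation: each edge `e` has a source `src e` and a target `tgt e`.
Loops and parallel edges are allowed. -/
structure Multigraph (V E : Type) where
  src : E → V
  tgt : E → V

namespace Multigraph

variable {V E : Type}

/-- `u` and `v` are joined by some edge satisfying the predicate `P`. -/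
def adjVia (G : Multigraph V E) (P : E → Prop) (u v : V) : Prop :=
  ∃ e, P e ∧ ((G.src e = u ∧ G.tgt e = v) ∨ (G.src e = v ∧ G.tgt e = u))

/-- `v` is reachable from `u` using only edges satisfying `P`. -/
def Reaches (G : Multigraph V E) (P : E → Prop) : V → V → Prop :=
  Relation.ReflTransGen (G.adjVia P)

/-- The graph is connected when only edges satisfying `P` are kept (all edges deleted
whose predicate fails, all vertices kept). -/
def ConnectedVia (G : Multigraph V E) (P : E → Prop) : Prop :=
  Nonempty V ∧ ∀ u v : V, G.Reaches P u v

def Connected (G : Multigraph V E) : Prop :=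
  G.ConnectedVia fun _ => True

/-- `G` is `k`-edge-connected: it is connected and has no edge cut of size less than `k`;
equivalently, deleting any set of fewer than `k` edges leaves it connected. -/
def EdgeConnected (G : Multigraph V E) (k : ℕ) : Prop :=
  ∀ S : Set E, S.ncard < k → G.ConnectedVia fun e => e ∉ S

/-- The degree of a vertex (loops counted twice). -/
noncomputable def degree (G : Multigraph V E) (v : V) : ℕ :=
  {e | G.src e = v}.ncard + {e | G.tgt e = v}.ncard

/-- Every vertex has degree exactly 3. -/
def Cubic (G : Multigraph V E) : Prop :=
  ∀ v : V, G.degree v = 3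

/-- `φ : E → Γ` is a flow: at every vertex, the sum over outgoing edges equals the
sum over incoming edges. -/
def IsFlow [Fintype E] {Γ : Type} [AddCommGroup Γ] (G : Multigraph V E) (φ : E → Γ) : Prop :=
  ∀ v : V, (∑ e : E, if G.src e = v then φ e else 0) = ∑ e : E, if G.tgt e = v then φ e else 0

/-- The vertex `v` is an endpoint of some edge of `C`. -/
def touches (G : Multigraph V E) (C : Set E) (v : V) : Prop :=
  ∃ e ∈ C, G.src e = v ∨ G.tgt e = v

/-- An edge set `C` is (the edge set of) a cycle: it is nonempty, every vertex it touches
has degree exactly 2 in it, and it is connected. -/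
def IsCycle (G : Multigraph V E) (C : Set E) : Prop :=
  C.Nonempty ∧
  (∀ v : V, G.touches C v →
    ({e ∈ C | G.src e = v}.ncard + {e ∈ C | G.tgt e = v}.ncard = 2)) ∧
  (∀ u v : V, G.touches C u → G.touches C v → G.Reaches (· ∈ C) u v)

/-- `R` is `k`-closed: every cycle with at least one edge outside `R` has at least
`k+1` edges outside `R`. -/
def Closed (G : Multigraph V E) (k : ℕ) (R : Set E) : Prop :=
  ∀ C : Set E, G.IsCycle C → (C \ R).Nonempty → k + 1 ≤ (C \ R).ncard

/-- The `k`-closure `⟨S⟩ₖ` of `S` : the minimal `k`-closed set containing `S`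
(the family of `k`-closed sets is closed under intersections). -/
def kClosure (G : Multigraph V E) (k : ℕ) (S : Set E) : Set E :=
  ⋂₀ {R : Set E | S ⊆ R ∧ G.Closed k R}

/-- `S` is a `k`-base: its `k`-closure is the whole edge set. -/
def IsBase (G : Multigraph V E) (k : ℕ) (S : Set E) : Prop :=
  G.kClosure k S = Set.univ

/-- An edge set `S` is peripheral if `G − S` is connected. -/
def Peripheral (G : Multigraph V E) (S : Set E) : Prop :=
  G.ConnectedVia fun e => e ∉ S

/-- The spanning subgraph `(V, F)` is a forest, i.e. contains no cycle. -/
def IsForest (G : Multigraph V E) (F : Set E) : Prop :=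
  ∀ C : Set E, G.IsCycle C → ¬ C ⊆ F

/-- `vs`, `es` describe a path: distinct vertices `vs 0, …, vs n` and distinct edges
`es 0, …, es (n-1)` where `es i` joins `vs i` and `vs (i+1)`. -/
def IsPath (G : Multigraph V E) {n : ℕ} (vs : Fin (n + 1) → V) (es : Fin n → E) : Prop :=
  Function.Injective vs ∧ Function.Injective es ∧
  ∀ i : Fin n,
    (G.src (es i) = vs i.castSucc ∧ G.tgt (es i) = vs i.succ) ∨
    (G.src (es i) = vs i.succ ∧ G.tgt (es i) = vs i.castSucc)

/-- The edge `e` has `y` as one endpoint and its other endpoint in `X`,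
i.e. `e ∈ E(y, X)`. -/
def joins (G : Multigraph V E) (e : E) (y : V) (X : Set V) : Prop :=
  (G.src e = y ∧ G.tgt e ∈ X) ∨ (G.tgt e = y ∧ G.src e ∈ X)

/-- `W` is the vertex set of a connected component of `G − X`. -/
def IsComponent (G : Multigraph V E) (X W : Set V) : Prop :=
  W.Nonempty ∧ Disjoint W X ∧
  (∀ u ∈ W, ∀ v : V, v ∉ X → G.adjVia (fun _ => True) u v → v ∈ W) ∧
  (∀ u ∈ W, ∀ v ∈ W, G.Reaches (fun e => G.src e ∉ X ∧ G.tgt e ∉ X) u v)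

/-- The subgraph induced on `W`, with only those of its edges satisfying `P` kept,
is connected. -/
def ConnectedOn (G : Multigraph V E) (W : Set V) (P : E → Prop) : Prop :=
  ∀ u ∈ W, ∀ v ∈ W, G.Reaches (fun e => P e ∧ G.src e ∈ W ∧ G.tgt e ∈ W) u v

/-- The subgraph induced on `W` is `k`-edge-connected. -/
def EdgeConnectedOn (G : Multigraph V E) (W : Set V) (k : ℕ) : Prop :=
  ∀ S : Set E, S.ncard < k → G.ConnectedOn W fun e => e ∉ S

/-- Some cycle lies entirely inside the vertex set `X`. -/
def HasCycleIn (G : Multigraph V E) (X : Set V) : Prop :=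
  ∃ C : Set E, G.IsCycle C ∧ ∀ e ∈ C, G.src e ∈ X ∧ G.tgt e ∈ X

/-- The edge cut `E(X, V \ X)`. -/
def cutEdges (G : Multigraph V E) (X : Set V) : Set E :=
  {e | (G.src e ∈ X ∧ G.tgt e ∉ X) ∨ (G.src e ∉ X ∧ G.tgt e ∈ X)}

/-- A cubic graph is cyclically `k`-edge-connected if every edge cut separating two
cycle-containing parts has at least `k` edges. -/
def CyclicallyEdgeConnected (G : Multigraph V E) (k : ℕ) : Prop :=
  ∀ X : Set V, G.HasCycleIn X → G.HasCycleIn Xᶜ → k ≤ (G.cutEdges X).ncard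

/-- `G` is 3-connected: more than 3 vertices, connected, and still connected after
deleting any two vertices. -/
def ThreeConnected [Fintype V] (G : Multigraph V E) : Prop :=
  3 < Fintype.card V ∧ G.Connected ∧
    ∀ u v : V, G.ConnectedOn {w : V | w ≠ u ∧ w ≠ v} fun _ => True

/-- The graph `G − r` obtained by deleting the vertex `r` and all incident edges. -/
def deleteVertex (G : Multigraph V E) (r : V) :
    Multigraph {v : V // v ≠ r} {e : E // G.src e ≠ r ∧ G.tgt e ≠ r} where
  src e := ⟨G.src e.1, e.2.1⟩
  tgt e := ⟨G.tgt e.1, e.2.2⟩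

end Multigraph

/-!
A `ℤ₂`-flow `φ` is an edge set with all degrees even, so it has an Eulerian orientation: an integer
flow `χ` equal to `±1` on `supp φ` and `0` elsewhere. Let `Γ` be the value group of `ψ` (any finite
abelian group will do in place of `ℤ_k`). For each `a : Γ`, the flow `ψ + χ • a` agrees with `ψ` off
`supp φ`, and an edge of `supp φ` is a zero of it for exactly one `a`. By averaging, some choice of
`a` leaves at most `t / |Γ|` zeros, all of them in `supp φ`. Adding to `φ` any `ℤ₂`-flow that
vanishes on these zeros keeps the pair nowhere zero, and such `ℤ₂`-flows are the solutions of at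
most `n + t / |Γ|` linear equations in `m` unknowns.
-/

namespace Multigraph

section EulerianSigns

variable {ι V : Type*}

/-- An incidence vector is a difference `e_u - e_w` of unit vectors, i.e. the column of an oriented
incidence matrix at an edge from `u` to `w`. It is zero exactly for loops. -/
def IsIncidenceVector (x : V → ℤ) : Prop :=
  ∃ u w, x = Pi.single u 1 - Pi.single w 1

lemma IsIncidenceVector.odd_of_ne_zero {x : V → ℤ} (hx : IsIncidenceVector x) {v : V}
    (hv : x v ≠ 0) : Odd (x v) := by
  obtain ⟨u, w, rfl⟩ := hx
  simp only [Pi.sub_apply, Pi.single_apply] at hv ⊢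
  split_ifs at hv ⊢ <;> simp_all

lemma IsIncidenceVector.exists_isIncidenceVector_add_smul {x y : V → ℤ} (hx : IsIncidenceVector x)
    (hy : IsIncidenceVector y) {v : V} (hxv : x v ≠ 0) (hyv : y v ≠ 0) :
    ∃ σ : ℤˣ, IsIncidenceVector (x + σ • y) := by
  obtain ⟨u, w, rfl⟩ := hx
  obtain ⟨u', w', rfl⟩ := hy
  have endpoint_eq {u w : V} (h : (Pi.single u 1 - Pi.single w 1 : V → ℤ) v ≠ 0) :
      u = v ∨ w = v := by
    contrapose! h
    simp [Pi.single_eq_of_ne h.1.symm, Pi.single_eq_of_ne h.2.symm]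
  rcases endpoint_eq hxv with rfl | rfl <;> rcases endpoint_eq hyv with rfl | rfl
  · exact ⟨-1, w', w, by simp⟩
  · exact ⟨1, u', w, by simp⟩
  · exact ⟨1, u, w', by simp⟩
  · exact ⟨-1, u, u', by simp⟩

lemma sum_smul_add_ite {R M : Type*} [AddCommMonoid M] [DistribSMul R M] {S : Finset ι} {b : ι}
    (hb : b ∈ S) (c : ι → R) (x : ι → M) (y : M) :
    ∑ e ∈ S, c e • (x e + if e = b then y else 0) = ∑ e ∈ S, c e • x e + c b • y := by
  simp [Finset.sum_add_distrib, hb]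

/-- This is the Eulerian orientation of an even edge set: `ε e = -1` reverses the edge `e`. -/
lemma exists_signs_sum_smul_eq_zero (S : Finset ι) (x : ι → V → ℤ)
    (hx : ∀ e ∈ S, IsIncidenceVector (x e)) (heven : ∀ v, Even (∑ e ∈ S, x e v)) :
    ∃ ε : ι → ℤˣ, ∑ e ∈ S, ε e • x e = 0 := by
  induction S using Finset.induction_on generalizing x with
  | empty => exact ⟨1, Finset.sum_empty⟩
  | insert a S ha ih =>
    simp only [Finset.sum_insert ha] at heven ⊢
    obtain ⟨hxa, hxS⟩ := (Finset.forall_mem_insert _ _ _).1 hx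
    by_cases hloop : x a = 0
    · obtain ⟨ε, hε⟩ := ih x hxS (by simpa [hloop] using heven)
      exact ⟨ε, by simp [hloop, hε]⟩
    -- Merging `a` into an edge `b` that meets it at `v` leaves a smaller even edge set.
    obtain ⟨v, hav⟩ := Function.ne_iff.1 hloop
    have hsum_ne : ∑ e ∈ S, x e v ≠ 0 := fun hzero =>
      Int.not_even_iff_odd.2 (hxa.odd_of_ne_zero hav) (by simpa [hzero] using heven v)
    obtain ⟨b, hb, hbv⟩ := Finset.exists_ne_zero_of_sum_ne_zero hsum_ne
    obtain ⟨σ, hσ⟩ := (hxS b hb).exists_isIncidenceVector_add_smul hxa hbv hav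
    let x' : ι → V → ℤ := fun e => x e + if e = b then σ • x a else 0
    have hmerge (c : ι → ℤˣ) : ∑ e ∈ S, c e • x' e = ∑ e ∈ S, c e • x e + c b • σ • x a :=
      sum_smul_add_ite hb c x (σ • x a)
    have hx' : ∀ e ∈ S, IsIncidenceVector (x' e) := fun e he => by
      by_cases heb : e = b
      · simpa [x', heb] using hσ
      · simpa [x', heb] using hxS e he
    have heven' (v : V) : Even (∑ e ∈ S, x' e v) := by
      have hsum : ∑ e ∈ S, x' e v = ∑ e ∈ S, x e v + σ • x a v := by
        simpa using congrFun (hmerge 1) v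
      rw [hsum, Int.even_add, ← Int.even_add.1 (heven v)]
      rcases Int.units_eq_one_or σ with rfl | rfl <;> simp
    obtain ⟨ε, hε⟩ := ih x' hx' heven'
    refine ⟨Function.update ε a (ε b * σ), ?_⟩
    have hagree : ∀ e ∈ S, Function.update ε a (ε b * σ) e • x e = ε e • x e := fun e he => by
      rw [Function.update_of_ne (ne_of_mem_of_not_mem he ha)]
    rw [Function.update_self, Finset.sum_congr rfl hagree, mul_smul, add_comm, ← hmerge, hε]

end EulerianSigns

section Flows

variable {V E Γ Δ : Type} [Fintype E] [AddCommGroup Γ] [AddCommGroup Δ] {G : Multigraph V E}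

/-- The column of `e` in the oriented incidence matrix of `G`. -/
noncomputable def incidenceVector (G : Multigraph V E) (e : E) : V → ℤ :=
  Pi.single (G.src e) 1 - Pi.single (G.tgt e) 1

/-- The net outflow of `φ` at each vertex, as a homomorphism. Its kernel is the group of flows. -/
noncomputable def boundary (G : Multigraph V E) (Γ : Type) [AddCommGroup Γ] :
    (E → Γ) →+ (V → Γ) :=
  AddMonoidHom.mk' (fun φ v => ∑ e, G.incidenceVector e v • φ e) fun φ ψ => by
    ext v
    simp [Finset.sum_add_distrib]

lemma boundary_apply (φ : E → Γ) (v : V) :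
    G.boundary Γ φ v = ∑ e, G.incidenceVector e v • φ e := rfl

lemma isFlow_iff_boundary_eq_zero {φ : E → Γ} : G.IsFlow φ ↔ G.boundary Γ φ = 0 := by
  simp [IsFlow, funext_iff, boundary_apply, incidenceVector, Pi.single_apply, sub_smul, ite_smul,
    sub_eq_zero, eq_comm (b := G.src _), eq_comm (b := G.tgt _)]

lemma IsFlow.add {φ ψ : E → Γ} (hφ : G.IsFlow φ) (hψ : G.IsFlow ψ) :
    G.IsFlow fun e => φ e + ψ e := by
  rw [isFlow_iff_boundary_eq_zero] at hφ hψ ⊢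
  exact (map_add _ φ ψ).trans (by rw [hφ, hψ, add_zero])

lemma IsFlow.map {φ : E → Γ} (hφ : G.IsFlow φ) (f : Γ →+ Δ) : G.IsFlow fun e => f (φ e) :=
  fun v => by simpa [apply_ite f] using congrArg f (hφ v)

lemma IsFlow.prodMk {φ : E → Γ} {ψ : E → Δ} (hφ : G.IsFlow φ) (hψ : G.IsFlow ψ) :
    G.IsFlow fun e => (φ e, ψ e) := by
  simpa using (hφ.map (AddMonoidHom.inl Γ Δ)).add (hψ.map (AddMonoidHom.inr Γ Δ))

lemma IsFlow.exists_signed_flow {φ : E → ZMod 2} (hφ : G.IsFlow φ) :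
    ∃ ε : E → ℤˣ, G.IsFlow fun e => if φ e = 0 then 0 else (ε e : ℤ) := by
  have heven : ∀ v, Even (∑ e with φ e ≠ 0, G.incidenceVector e v) := fun v => by
    have hv := congrFun (isFlow_iff_boundary_eq_zero.1 hφ) v
    rw [boundary_apply, Pi.zero_apply] at hv
    rw [← ZMod.intCast_eq_zero_iff_even, Int.cast_sum, Finset.sum_filter]
    refine (Finset.sum_congr rfl fun e _ => ?_).trans hv
    by_cases he : φ e = 0
    · simp [he]
    · have hone : φ e = 1 := Fin.eq_one_of_ne_zero (φ e) he
      simp [hone]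
  obtain ⟨ε, hε⟩ := exists_signs_sum_smul_eq_zero _ G.incidenceVector (fun _ _ => ⟨_, _, rfl⟩) heven
  refine ⟨ε, isFlow_iff_boundary_eq_zero.2 ?_⟩
  rw [← hε, Finset.sum_filter]
  ext v
  rw [boundary_apply, Finset.sum_apply]
  refine Finset.sum_congr rfl fun e _ => ?_
  by_cases he : φ e = 0 <;> simp [he, Units.smul_def, mul_comm]

lemma IsFlow.exists_covering_flow_ncard_zeros_le [Finite Γ] {φ : E → ZMod 2} {ψ : E → Γ}
    (hφ : G.IsFlow φ) (hψ : G.IsFlow ψ) (hcover : ∀ e, φ e ≠ 0 ∨ ψ e ≠ 0) :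
    ∃ ψ' : E → Γ, G.IsFlow ψ' ∧ (∀ e, φ e ≠ 0 ∨ ψ' e ≠ 0) ∧
      ({e | ψ' e = 0}.ncard : ℝ) ≤ {e | φ e ≠ 0}.ncard / Nat.card Γ := by
  have := Fintype.ofFinite Γ
  obtain ⟨ε, hχ⟩ := hφ.exists_signed_flow
  have hcard : (({e | φ e ≠ 0} : Finset E).card : ℝ) ≤
      (Finset.univ : Finset Γ).card • ({e | φ e ≠ 0}.ncard / Nat.card Γ : ℝ) := by
    simp [Set.ncard_eq_toFinset_card', mul_div_cancel₀]
  -- If `φ e ≠ 0`, then `(ε e)⁻¹ • -ψ e` is the only `a` for which `ψ + χ • a` vanishes at `e`.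
  obtain ⟨a, -, ha⟩ := Finset.exists_card_fiber_le_of_card_le_nsmul
    (f := fun e => (ε e)⁻¹ • -ψ e) Finset.univ_nonempty hcard
  have hcover' : ∀ e, φ e ≠ 0 ∨ ψ e + (if φ e = 0 then 0 else (ε e : ℤ)) • a ≠ 0 := fun e => by
    by_cases he : φ e = 0
    · simpa [he] using hcover e
    · exact Or.inl he
  refine ⟨_, hψ.add (hχ.map (zmultiplesHom Γ a)), hcover', le_trans ?_ ha⟩
  rw [← Set.ncard_coe_finset]
  refine Nat.cast_le.2 (Set.ncard_le_ncard fun e he => ?_)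
  have hφe : φ e ≠ 0 := (hcover' e).resolve_right (not_not.2 he)
  have hzero : ψ e + ε e • a = 0 := by simpa [hφe, Units.smul_def] using he
  have hfiber : (ε e)⁻¹ • -ψ e = a := inv_smul_eq_iff.2 (neg_eq_of_add_eq_zero_right hzero)
  simp only [Finset.coe_filter, Finset.mem_filter_univ, Set.mem_ofPred_eq]
  exact ⟨hφe, hfiber⟩

lemma card_le_card_ker_mul_card {A B : Type*} [AddGroup A] [AddGroup B] [Finite B] (f : A →+ B) :
    Nat.card A ≤ Nat.card f.ker * Nat.card B := by
  rw [← f.ker.card_mul_index, AddSubgroup.index_ker]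
  exact Nat.mul_le_mul_left _ (Finite.card_subtype_le _)

lemma card_pow_le_card_flows_vanishing_on_mul [Fintype V] [Finite Γ] (G : Multigraph V E)
    (Z : Set E) :
    Nat.card Γ ^ Fintype.card E ≤ Nat.card {x : E → Γ // G.IsFlow x ∧ ∀ e ∈ Z, x e = 0} *
      Nat.card Γ ^ (Fintype.card V + Z.ncard) := by
  let f : (E → Γ) →+ (V → Γ) × (Z → Γ) :=
    (G.boundary Γ).prod (AddMonoidHom.mk' (fun x e => x e) fun _ _ => rfl)
  have hker : ∀ x, G.IsFlow x ∧ (∀ e ∈ Z, x e = 0) ↔ x ∈ f.ker := fun x => by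
    simp [f, isFlow_iff_boundary_eq_zero, AddMonoidHom.mem_ker, funext_iff]
  rw [Nat.card_congr (Equiv.subtypeEquivRight hker)]
  simpa [Nat.card_fun, pow_add, Set.ncard_eq_toFinset_card'] using card_le_card_ker_mul_card f

lemma IsFlow.card_flows_vanishing_on_zeros_le [Finite Γ] [Finite Δ] {φ : E → Γ} {ψ : E → Δ}
    (hφ : G.IsFlow φ) (hψ : G.IsFlow ψ) (hcover : ∀ e, φ e ≠ 0 ∨ ψ e ≠ 0) :
    Nat.card {x : E → Γ // G.IsFlow x ∧ ∀ e, ψ e = 0 → x e = 0} ≤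
      Nat.card {θ : E → Γ × Δ // G.IsFlow θ ∧ ∀ e, θ e ≠ 0} := by
  refine Nat.card_le_card_of_injective
    (fun x => ⟨fun e => (φ e + x.1 e, ψ e), (hφ.add x.2.1).prodMk hψ, fun e he => ?_⟩)
    fun x y hxy => ?_
  · obtain ⟨hsum, hψe⟩ := Prod.mk_eq_zero.1 he
    rw [x.2.2 e hψe, add_zero] at hsum
    exact (hcover e).elim (· hsum) (· hψe)
  · ext e
    simpa using congrArg Prod.fst (congrFun (congrArg Subtype.val hxy) e)

end Flows

end Multigraph

theorem many_nowhere_zero_flows_from_covering_supports_general {V E Γ : Type} [Fintype V]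
    [Fintype E] [AddCommGroup Γ] [Finite Γ] (G : Multigraph V E)
    (φ : E → ZMod 2) (ψ : E → Γ) (hφ : G.IsFlow φ) (hψ : G.IsFlow ψ)
    (hcover : ∀ e : E, φ e ≠ 0 ∨ ψ e ≠ 0)
    (t : ℕ) (ht : t = {e : E | φ e ≠ 0}.ncard) :
    (2 : ℝ) ^ ((Fintype.card E : ℝ) - (Fintype.card V : ℝ) - (t : ℝ) / (Nat.card Γ : ℝ)) ≤
      Nat.card {θ : E → ZMod 2 × Γ // G.IsFlow θ ∧ ∀ e : E, θ e ≠ 0} := by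
  subst ht
  obtain ⟨ψ', hψ', hcover', hzeros⟩ := hφ.exists_covering_flow_ncard_zeros_le hψ hcover
  have hcount : (2 : ℝ) ^ Fintype.card E ≤
      Nat.card {θ : E → ZMod 2 × Γ // G.IsFlow θ ∧ ∀ e : E, θ e ≠ 0} *
        2 ^ (Fintype.card V + {e | ψ' e = 0}.ncard) := by
    have hle := G.card_pow_le_card_flows_vanishing_on_mul (Γ := ZMod 2) {e | ψ' e = 0}
    rw [Nat.card_zmod] at hle
    exact_mod_cast hle.trans
      (Nat.mul_le_mul_right _ (hφ.card_flows_vanishing_on_zeros_le hψ' hcover'))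
  calc (2 : ℝ) ^ ((Fintype.card E : ℝ) - (Fintype.card V : ℝ) -
        ({e : E | φ e ≠ 0}.ncard : ℝ) / (Nat.card Γ : ℝ))
      ≤ 2 ^ ((Fintype.card E : ℝ) - ((Fintype.card V + {e | ψ' e = 0}.ncard : ℕ) : ℝ)) :=
        Real.rpow_le_rpow_of_exponent_le one_le_two (by push_cast; linarith)
    _ = 2 ^ Fintype.card E / 2 ^ (Fintype.card V + {e | ψ' e = 0}.ncard) := by
        rw [Real.rpow_sub two_pos, Real.rpow_natCast, Real.rpow_natCast]
    _ ≤ _ := (div_le_iff₀ (by positivity)).2 hcount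

/-- If `φ : E → ℤ₂` and `ψ : E → ℤ_k` are flows whose supports cover `E`, and
`t = |supp(φ)|`, then `G` has at least `2^(m - n - t/k)` nowhere-zero
`ℤ₂ × ℤ_k`-flows. -/
theorem many_nowhere_zero_flows_from_covering_supports {V E : Type} [Fintype V] [Fintype E]
    (G : Multigraph V E) (k : ℕ) (hk : 2 ≤ k)
    (φ : E → ZMod 2) (ψ : E → ZMod k) (hφ : G.IsFlow φ) (hψ : G.IsFlow ψ)
    (hcover : ∀ e : E, φ e ≠ 0 ∨ ψ e ≠ 0)
    (t : ℕ) (ht : t = {e : E | φ e ≠ 0}.ncard) :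
    (2 : ℝ) ^ ((Fintype.card E : ℝ) - (Fintype.card V : ℝ) - (t : ℝ) / (k : ℝ)) ≤
      Nat.card {θ : E → ZMod 2 × ZMod k // G.IsFlow θ ∧ ∀ e : E, θ e ≠ 0} := by
  have : NeZero k := ⟨by omega⟩
  simpa using many_nowhere_zero_flows_from_covering_supports_general G φ ψ hφ hψ hcover t ht
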